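/- Let k, ℓ ≥ 1 with k ≠ ℓ. For all u, v ∈ ℕ (not necessarily distinct) and for every choice of X ∈ {R_k, T_k} and Y ∈ {R_ℓ, T_ℓ}, there exists w ∈ ℕ with (w,u) ∈ X and (w,v) ∈ Y. -/

import Mathlib

/-- For `k ≥ 1`, the relation `R_k ⊆ ℕ × ℕ`: `(u,v) ∈ R_k` iff
`v = 2^u·3^j` or `v = 2^j·3^u` for some `j`, or `u = 2^v·3^j` or `u = 2^j·3^v`
for some `j`, or `u = 2^v·5^k`. -/
def Rk (k : ℕ) : Set (ℕ × ℕ) :=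
  {p | (∃ j : ℕ, p.2 = 2 ^ p.1 * 3 ^ j ∨ p.2 = 2 ^ j * 3 ^ p.1) ∨
       (∃ j : ℕ, p.1 = 2 ^ p.2 * 3 ^ j ∨ p.1 = 2 ^ j * 3 ^ p.2) ∨
       p.1 = 2 ^ p.2 * 5 ^ k}

/-- `T_k = (ℕ × ℕ) ∖ R_k`. -/
def Tk (k : ℕ) : Set (ℕ × ℕ) := (Rk k)ᶜ

theorem aux_uniq {a b c a' b' c' : ℕ}
    (h : 2 ^ a * 3 ^ b * 5 ^ c = 2 ^ a' * 3 ^ b' * 5 ^ c') : a = a' ∧ b = b' ∧ c = c' := by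
  have key : ∀ x y z : ℕ, (2 ^ x * 3 ^ y * 5 ^ z).factorization =
      Finsupp.single 2 x + Finsupp.single 3 y + Finsupp.single 5 z := by
    intro x y z
    rw [Nat.factorization_mul (by positivity) (by positivity),
      Nat.factorization_mul (by positivity) (by positivity),
      Nat.Prime.factorization_pow (by norm_num), Nat.Prime.factorization_pow (by norm_num),
      Nat.Prime.factorization_pow (by norm_num)]
  have h' := congrArg Nat.factorization h
  rw [key, key] at h'
  refine ⟨?_, ?_, ?_⟩
  · simpa using DFunLike.congr_fun h' 2
  · simpa using DFunLike.congr_fun h' 3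
  · simpa using DFunLike.congr_fun h' 5

theorem aux_T {k v a b c : ℕ} (hw : v < 2 ^ a * 3 ^ b * 5 ^ c)
    (h1 : c = 0 → a ≠ v ∧ b ≠ v) (h2 : ¬ (a = v ∧ b = 0 ∧ c = k)) :
    (2 ^ a * 3 ^ b * 5 ^ c, v) ∉ Rk k := by
  have big : ∀ w j : ℕ, v < w → v ≠ 2 ^ w * 3 ^ j ∧ v ≠ 2 ^ j * 3 ^ w := by
    intro w j hvw
    have e2 : w < 2 ^ w := Nat.lt_pow_self (by norm_num)
    have e3 : w < 3 ^ w := Nat.lt_pow_self (by norm_num)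
    have p3 : 0 < 3 ^ j := by positivity
    have p2 : 0 < 2 ^ j := by positivity
    constructor
    · have := Nat.le_mul_of_pos_right (2 ^ w) p3
      omega
    · have := Nat.le_mul_of_pos_left (3 ^ w) p2
      omega
  rintro (⟨j, h | h⟩ | ⟨j, h | h⟩ | h)
  · exact (big _ j hw).1 h
  · exact (big _ j hw).2 h
  · obtain ⟨x, y, z⟩ := aux_uniq (a' := v) (b' := j) (c' := 0) (h.trans (by simp))
    exact (h1 z).1 x
  · obtain ⟨x, y, z⟩ := aux_uniq (a' := j) (b' := v) (c' := 0) (h.trans (by simp))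
    exact (h1 z).2 y
  · exact h2 (aux_uniq (b' := 0) (h.trans (by simp)))

theorem aux_RT (k l : ℕ) (hk : 1 ≤ k) (hkl : k ≠ l) (u v : ℕ) :
    ∃ w : ℕ, (w, u) ∈ Rk k ∧ (w, v) ∉ Rk l := by
  by_cases huv : u = v
  · subst huv
    refine ⟨2 ^ u * 3 ^ 0 * 5 ^ k, Or.inr (Or.inr (by simp)), aux_T ?_ (by omega) (by omega)⟩
    have e2 : u < 2 ^ u := Nat.lt_pow_self (by norm_num)
    have := Nat.le_mul_of_pos_right (2 ^ u) (show 0 < 5 ^ k by positivity)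
    simp only [pow_zero, mul_one]
    omega
  · refine ⟨2 ^ u * 3 ^ (v + 1) * 5 ^ 0, Or.inr (Or.inl ⟨v + 1, Or.inl (by simp)⟩),
      aux_T ?_ (by omega) (by omega)⟩
    have e2 : v + 1 < 3 ^ (v + 1) := Nat.lt_pow_self (by norm_num)
    have := Nat.le_mul_of_pos_left (3 ^ (v + 1)) (show 0 < 2 ^ u by positivity)
    simp only [pow_zero, mul_one]
    omega

theorem stmt_9 (k l : ℕ) (hk : 1 ≤ k) (hl : 1 ≤ l) (hkl : k ≠ l) (u v : ℕ)
    (X Y : Set (ℕ × ℕ)) (hX : X = Rk k ∨ X = Tk k) (hY : Y = Rk l ∨ Y = Tk l) :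
    ∃ w : ℕ, (w, u) ∈ X ∧ (w, v) ∈ Y := by
  rcases hX with rfl | rfl <;> rcases hY with rfl | rfl
  · exact ⟨2 ^ u * 3 ^ v, Or.inr (Or.inl ⟨v, Or.inl rfl⟩), Or.inr (Or.inl ⟨u, Or.inr rfl⟩)⟩
  · exact aux_RT k l hk hkl u v
  · obtain ⟨w, h1, h2⟩ := aux_RT l k hl hkl.symm v u
    exact ⟨w, h2, h1⟩
  · have e : k + l + u + v < 5 ^ (k + l + u + v) := Nat.lt_pow_self (by norm_num)
    refine ⟨2 ^ 0 * 3 ^ 0 * 5 ^ (k + l + u + v), aux_T ?_ (by omega) (by omega),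
      aux_T ?_ (by omega) (by omega)⟩ <;> simp only [pow_zero, one_mul] <;> omega
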